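/- Convergence of RNM below the critical threshold: Let p be a polynomial with complex coefficients of degree n ≥ 2 and let z₀ ∈ ℂ be a seed such that |p(z₀)| ≤ |p(w)| for every critical point w of p with p'(w) = 0 and p(w) ≠ 0. Then the RNM orbit z₀, z₁, z₂, … converges to a root of p, i.e., there exists θ* ∈ ℂ with p(θ*) = 0 such that z_t → θ* as t → ∞. -/

import Mathlib

open Polynomial Filter Topology
open scoped Classical

noncomputable section

/-- The `j`-th derivative of `p`, evaluated at `z`. -/
def dEval (p : Polynomial ℂ) (j : ℕ) (z : ℂ) : ℂ :=
  (Polynomial.derivative^[j] p).eval z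

/-- The index `k(z) = min {j ≥ 1 : p^{(j)}(z) ≠ 0}`. -/
def kIndex (p : Polynomial ℂ) (z : ℂ) : ℕ :=
  sInf {j : ℕ | 1 ≤ j ∧ dEval p j z ≠ 0}

/-- `A(z) = max {|p^{(j)}(z)|/j! : j = 0, …, n}`, where `n` is the degree of `p`. -/
def Amax (p : Polynomial ℂ) (z : ℂ) : ℝ :=
  (Finset.range (p.natDegree + 1)).sup' Finset.nonempty_range_add_one
    (fun j => ‖dEval p j z‖ / (Nat.factorial j))

/-- `u_m = (1/m!) · p(z) · conj(p^{(m)}(z))`. -/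
def uPar (p : Polynomial ℂ) (m : ℕ) (z : ℂ) : ℂ :=
  (1 / (Nat.factorial m : ℂ)) * p.eval z * (starRingEnd ℂ) (dEval p m z)

/-- `γ = 2 · Re(u_m^(m-1))`. -/
def gammaPar (p : Polynomial ℂ) (m : ℕ) (z : ℂ) : ℝ :=
  2 * ((uPar p m z) ^ (m - 1)).re

/-- `δ = -2 · Im(u_m^(m-1))`. -/
def deltaPar (p : Polynomial ℂ) (m : ℕ) (z : ℂ) : ℝ :=
  -2 * ((uPar p m z) ^ (m - 1)).im

/-- `c_m = max {|γ|, |δ|}`. -/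
def cPar (p : Polynomial ℂ) (m : ℕ) (z : ℂ) : ℝ :=
  max |gammaPar p m z| |deltaPar p m z|

/-- The angle `θ`: `0` if `c = |γ|, γ < 0`; `π/m` if `c = |γ|, γ > 0`;
`π/(2m)` if `c = |δ|, δ < 0`; `3π/(2m)` if `c = |δ|, δ > 0`. -/
def thetaPar (p : Polynomial ℂ) (m : ℕ) (z : ℂ) : ℝ :=
  if cPar p m z = |gammaPar p m z| then
    if gammaPar p m z < 0 then 0 else Real.pi / m
  else
    if deltaPar p m z < 0 then Real.pi / (2 * m) else 3 * Real.pi / (2 * m)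

/-- `C_m = c_m · |u_m|^(2-m) / (6 · A(z)²)`. -/
def CPar (p : Polynomial ℂ) (m : ℕ) (z : ℂ) : ℝ :=
  cPar p m z * ‖uPar p m z‖ ^ ((2 : ℤ) - (m : ℤ)) / (6 * (Amax p z) ^ 2)

/-- The Robust Newton iterate with prescribed index `m`:
`z + (C_m/3) · (u_m/|u_m|) · e^(iθ)`. -/
def rniWith (p : Polynomial ℂ) (m : ℕ) (z : ℂ) : ℂ :=
  z + (↑(CPar p m z / 3) : ℂ) * (uPar p m z / (↑(‖uPar p m z‖) : ℂ)) *
    Complex.exp ((↑(thetaPar p m z) : ℂ) * Complex.I)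

/-- The Robust Newton iterate `N̂_p(z)`. -/
def RN (p : Polynomial ℂ) (z : ℂ) : ℂ := rniWith p (kIndex p z) z

/-- The RNM orbit of the seed `z₀`: `z_{t+1} = N̂_p(z_t)` when `p(z_t) ≠ 0`,
and `z_{t+1} = z_t` when `p(z_t) = 0`. -/
def rnmOrbit (p : Polynomial ℂ) (z₀ : ℂ) : ℕ → ℂ
  | 0 => z₀
  | t + 1 =>
      if p.eval (rnmOrbit p z₀ t) = 0 then rnmOrbit p z₀ t
      else RN p (rnmOrbit p z₀ t)

/-!
Write `r = ‖N̂_p(z) - z‖ = C_k/3` and expand `|p|²` at `z` along the step. All Taylor coefficients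
are at most `A` and those of index `1, …, k-1` vanish. The angle `θ` makes the leading cross term
equal to `-18 A² r^(k+1)`, while the remaining terms contribute at most `8 A² r^(k+1)`. Hence each
step lowers `|p|²` by at least `10 A² r^(k+1)`, so `r → 0` along every orbit. Since
`‖u_k‖ ≤ 18 A² r`, and `‖u_1‖ = |p p'|`, every cluster point of the orbit is a zero of `p p'`. There
are finitely many of those, so by Ostrowski's theorem the orbit converges, from any seed, to a zero
of `p` or of `p'`. As the first step already brings `|p|` strictly below its value at the seed, the
threshold hypothesis excludes the critical points that are not roots.
-/

section Sequences

lemma tendsto_sub_succ_zero_of_antitone {f : ℕ → ℝ} (hf : Antitone f)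
    (hbdd : BddBelow (Set.range f)) : Tendsto (fun t => f t - f (t + 1)) atTop (𝓝 0) := by
  have hlim := tendsto_atTop_ciInf hf hbdd
  simpa using hlim.sub (hlim.comp (tendsto_add_atTop_nat 1))

lemma tendsto_zero_of_tendsto_pow_zero {ι : Type*} {l : Filter ι} {f : ι → ℝ} {n : ℕ}
    (hn : n ≠ 0) (hf : ∀ i, 0 ≤ f i) (h : Tendsto (fun i => f i ^ n) l (𝓝 0)) :
    Tendsto f l (𝓝 0) := by
  have hroot := h.rpow_const (p := (n : ℝ)⁻¹) (Or.inr (by positivity))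
  rw [Real.zero_rpow (by positivity)] at hroot
  exact hroot.congr fun i => Real.pow_rpow_inv_natCast (hf i) hn

/-- **Ostrowski's theorem**: once the steps are shorter than the width `r / 2` of an annulus around
`w` free of cluster points, the sequence can no longer cross it. -/
theorem tendsto_of_isolated_mapClusterPt {X : Type*} [PseudoMetricSpace X] [ProperSpace X]
    {y : ℕ → X} {w : X} (hw : MapClusterPt w atTop y)
    (hstep : Tendsto (fun t => dist (y (t + 1)) (y t)) atTop (𝓝 0))
    (hiso : ∀ᶠ x in 𝓝[≠] w, ¬ MapClusterPt x atTop y) : Tendsto y atTop (𝓝 w) := by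
  obtain ⟨ε₀, hε₀, hball⟩ := Metric.mem_nhdsWithin_iff.1 hiso
  rw [Metric.tendsto_atTop]
  intro ε hε
  obtain ⟨r, hr, hr_lt⟩ := exists_between (lt_min hε₀ hε)
  obtain ⟨hrε₀, hrε⟩ := lt_min_iff.1 hr_lt
  have hannulus : ∀ᶠ t in atTop, y t ∉ Metric.closedBall w r \ Metric.ball w (r / 2) := by
    by_contra hfreq
    obtain ⟨x, ⟨hxr, hx_far⟩, hx⟩ :=
      ((isCompact_closedBall w r).diff Metric.isOpen_ball).exists_mapClusterPt_of_frequently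
        (not_eventually.1 hfreq |>.mono fun _ => not_not.1)
    have hxw : x ≠ w := by
      rintro rfl
      exact hx_far (Metric.mem_ball_self (half_pos hr))
    exact hball ⟨Metric.closedBall_subset_ball hrε₀ hxr, hxw⟩ hx
  obtain ⟨T, hT⟩ := eventually_atTop.1
    (hannulus.and (hstep.eventually (gt_mem_nhds (half_pos hr))))
  obtain ⟨s, hTs, hs⟩ := frequently_atTop.1
    (hw.frequently (Metric.ball_mem_nhds w (half_pos hr))) T
  have htrap : ∀ t ≥ s, dist (y t) w < r / 2 := by
    intro t hst
    induction t, hst using Nat.le_induction with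
    | base => exact hs
    | succ t hst ih =>
      have hclose : dist (y (t + 1)) w ≤ r := by
        linarith [dist_triangle (y (t + 1)) (y t) w, (hT t (by omega)).2]
      by_contra hfar
      exact (hT (t + 1) (by omega)).1 ⟨hclose, hfar⟩
  exact ⟨s, fun t ht => (htrap t ht).trans (by linarith)⟩

end Sequences

section PolynomialExpansion

lemma geom_sum_le_inv_one_sub {r : ℝ} (h0 : 0 ≤ r) (h1 : r < 1) (n : ℕ) :
    ∑ i ∈ Finset.range n, r ^ i ≤ (1 - r)⁻¹ := by
  rw [← tsum_geometric_of_lt_one h0 h1]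
  exact (summable_geometric_of_lt_one h0 h1).sum_le_tsum _ fun i _ => pow_nonneg h0 i

variable {𝕜 : Type*} {k : ℕ} {A : ℝ}

lemma norm_eval_sub_coeff_sub_coeff_mul_pow_le [NormedField 𝕜] {q : 𝕜[X]} {h : 𝕜} (hk : k ≠ 0)
    (hA : ∀ j, ‖q.coeff j‖ ≤ A) (hgap : ∀ j, j ≠ 0 → j < k → q.coeff j = 0) (hh : ‖h‖ < 1) :
    ‖q.eval h - q.coeff 0 - q.coeff k * h ^ k‖ ≤ A * ‖h‖ ^ (k + 1) * (1 - ‖h‖)⁻¹ := by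
  have hA0 : 0 ≤ A := (norm_nonneg _).trans (hA 0)
  set n := q.natDegree + 1
  have hlow : ∑ j ∈ Finset.range k, q.coeff j * h ^ j = q.coeff 0 := by
    rw [Finset.sum_eq_single_of_mem 0 (Finset.mem_range.2 (Nat.pos_of_ne_zero hk))]
    · rw [pow_zero, mul_one]
    · intro j hj hj0
      rw [hgap j hj0 (Finset.mem_range.1 hj), zero_mul]
  have htail : q.eval h - q.coeff 0 - q.coeff k * h ^ k
      = ∑ i ∈ Finset.range n, q.coeff (k + 1 + i) * h ^ (k + 1 + i) := by
    rw [eval_eq_sum_range' (n := k + 1 + n) (by omega), Finset.sum_range_add,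
      Finset.sum_range_succ, hlow]
    ring
  calc ‖q.eval h - q.coeff 0 - q.coeff k * h ^ k‖
      ≤ ∑ i ∈ Finset.range n, A * ‖h‖ ^ (k + 1) * ‖h‖ ^ i := by
        rw [htail]
        refine norm_sum_le_of_le _ fun i _ => ?_
        rw [norm_mul, norm_pow, pow_add, ← mul_assoc]
        gcongr
        exact hA _
    _ = A * ‖h‖ ^ (k + 1) * ∑ i ∈ Finset.range n, ‖h‖ ^ i := by rw [Finset.mul_sum]
    _ ≤ A * ‖h‖ ^ (k + 1) * (1 - ‖h‖)⁻¹ := by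
        gcongr
        exact geom_sum_le_inv_one_sub (norm_nonneg h) hh n

lemma norm_add_add_sq_le [RCLike 𝕜] {E : Type*} [SeminormedAddCommGroup E] [InnerProductSpace 𝕜 E]
    {a b S : E} {r : ℝ} (hk : k ≠ 0) (hr0 : 0 ≤ r) (hr : r ≤ 1 / 2) (ha : ‖a‖ ≤ A)
    (hb : ‖b‖ ≤ A * r ^ k) (hS : ‖S‖ ≤ 2 * A * r ^ (k + 1)) :
    ‖a + (b + S)‖ ^ 2
      ≤ ‖a‖ ^ 2 + 2 * RCLike.re (inner 𝕜 a b) + 8 * A ^ 2 * r ^ (k + 1) := by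
  have hA0 : 0 ≤ A := (norm_nonneg a).trans ha
  have hcross : RCLike.re (inner 𝕜 a S) ≤ 2 * A ^ 2 * r ^ (k + 1) := calc
    RCLike.re (inner 𝕜 a S) ≤ ‖a‖ * ‖S‖ := re_inner_le_norm a S
    _ ≤ A * (2 * A * r ^ (k + 1)) := by gcongr
    _ = 2 * A ^ 2 * r ^ (k + 1) := by ring
  have hbS : ‖b + S‖ ≤ 2 * A * r ^ k := calc
    ‖b + S‖ ≤ A * r ^ k + 2 * A * r ^ (k + 1) := (norm_add_le b S).trans (by gcongr)
    _ = A * r ^ k * (1 + 2 * r) := by ring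
    _ ≤ A * r ^ k * 2 := by gcongr; linarith
    _ = 2 * A * r ^ k := by ring
  have hquad : ‖b + S‖ ^ 2 ≤ 4 * A ^ 2 * r ^ (k + 1) := calc
    ‖b + S‖ ^ 2 ≤ (2 * A * r ^ k) ^ 2 := by gcongr
    _ = 4 * A ^ 2 * r ^ (2 * k) := by ring
    _ ≤ 4 * A ^ 2 * r ^ (k + 1) := by
        gcongr 4 * A ^ 2 * ?_
        exact pow_le_pow_of_le_one hr0 (by linarith) (by omega)
  rw [norm_add_sq (𝕜 := 𝕜), inner_add_right, map_add]
  linarith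

lemma norm_eval_sq_le [RCLike 𝕜] {q : 𝕜[X]} {h : 𝕜} (hk : k ≠ 0) (hA : ∀ j, ‖q.coeff j‖ ≤ A)
    (hgap : ∀ j, j ≠ 0 → j < k → q.coeff j = 0) (hh : ‖h‖ ≤ 1 / 2) :
    ‖q.eval h‖ ^ 2 ≤ ‖q.coeff 0‖ ^ 2 + 2 * RCLike.re (inner 𝕜 (q.coeff 0) (q.coeff k * h ^ k))
      + 8 * A ^ 2 * ‖h‖ ^ (k + 1) := by
  have hA0 : 0 ≤ A := (norm_nonneg _).trans (hA 0)
  have hlead : ‖q.coeff k * h ^ k‖ ≤ A * ‖h‖ ^ k := by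
    rw [norm_mul, norm_pow]
    gcongr
    exact hA k
  have hrem : ‖q.eval h - q.coeff 0 - q.coeff k * h ^ k‖ ≤ 2 * A * ‖h‖ ^ (k + 1) := calc
    _ ≤ A * ‖h‖ ^ (k + 1) * (1 - ‖h‖)⁻¹ :=
        norm_eval_sub_coeff_sub_coeff_mul_pow_le hk hA hgap (by linarith)
    _ ≤ A * ‖h‖ ^ (k + 1) * 2 := by
        gcongr
        exact inv_le_of_inv_le₀ two_pos (by linarith)
    _ = 2 * A * ‖h‖ ^ (k + 1) := by ring
  simpa using norm_add_add_sq_le (𝕜 := 𝕜) hk (norm_nonneg h) hh (hA 0) hlead hrem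

end PolynomialExpansion

section Parameters

variable {p : ℂ[X]} {m : ℕ} {z : ℂ}

lemma dEval_eq_factorial_mul_coeff_taylor (p : ℂ[X]) (j : ℕ) (z : ℂ) :
    dEval p j z = (j.factorial : ℂ) * (taylor z p).coeff j := by
  rw [dEval, taylor_coeff, ← factorial_smul_hasseDeriv]
  rw [LinearMap.smul_apply, eval_smul, nsmul_eq_mul]

lemma dEval_ne_zero_iff {j : ℕ} : dEval p j z ≠ 0 ↔ (taylor z p).coeff j ≠ 0 := by
  simp [dEval_eq_factorial_mul_coeff_taylor, j.factorial_ne_zero]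

lemma norm_dEval_div_factorial (p : ℂ[X]) (j : ℕ) (z : ℂ) :
    ‖dEval p j z‖ / j.factorial = ‖(taylor z p).coeff j‖ := by
  rw [dEval_eq_factorial_mul_coeff_taylor, norm_mul, Complex.norm_natCast]
  exact mul_div_cancel_left₀ _ (by positivity)

lemma norm_coeff_taylor_le_Amax (p : ℂ[X]) (z : ℂ) (j : ℕ) :
    ‖(taylor z p).coeff j‖ ≤ Amax p z := by
  have hle : ∀ i ≤ p.natDegree, ‖(taylor z p).coeff i‖ ≤ Amax p z := fun i hi => by
    rw [← norm_dEval_div_factorial]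
    exact Finset.le_sup' (fun i => ‖dEval p i z‖ / (Nat.factorial i)) (by simpa using hi)
  rcases le_or_gt j p.natDegree with hj | hj
  · exact hle j hj
  · rw [coeff_eq_zero_of_natDegree_lt (by rwa [natDegree_taylor]), norm_zero]
    exact (norm_nonneg _).trans (hle 0 (Nat.zero_le _))

lemma norm_leadingCoeff_le_Amax (p : ℂ[X]) (z : ℂ) : ‖p.leadingCoeff‖ ≤ Amax p z := by
  simpa using norm_coeff_taylor_le_Amax p z p.natDegree

lemma Amax_pos (hp : p ≠ 0) (z : ℂ) : 0 < Amax p z :=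
  (norm_pos_iff.2 (leadingCoeff_ne_zero.2 hp)).trans_le (norm_leadingCoeff_le_Amax p z)

lemma continuous_Amax (p : ℂ[X]) : Continuous (Amax p) := by
  refine Continuous.finset_sup'_apply _ fun j _ => ?_
  exact (Polynomial.continuous _).norm.div_const _

lemma uPar_eq_eval_mul_conj_coeff_taylor (p : ℂ[X]) (m : ℕ) (z : ℂ) :
    uPar p m z = p.eval z * (starRingEnd ℂ) ((taylor z p).coeff m) := by
  have hm : (m.factorial : ℂ) ≠ 0 := by exact_mod_cast m.factorial_ne_zero
  rw [uPar, dEval_eq_factorial_mul_coeff_taylor, map_mul, map_natCast]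
  field_simp

lemma norm_uPar_le (p : ℂ[X]) (m : ℕ) (z : ℂ) : ‖uPar p m z‖ ≤ Amax p z ^ 2 := by
  rw [uPar_eq_eval_mul_conj_coeff_taylor, norm_mul, RCLike.norm_conj, ← taylor_coeff_zero, sq]
  exact mul_le_mul (norm_coeff_taylor_le_Amax p z 0) (norm_coeff_taylor_le_Amax p z m)
    (norm_nonneg _) ((norm_nonneg _).trans (norm_coeff_taylor_le_Amax p z 0))

lemma ne_zero_of_uPar_ne_zero (hu : uPar p m z ≠ 0) : p ≠ 0 := by
  rintro rfl
  simp [uPar] at hu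

lemma cPar_eq_two_mul_max (p : ℂ[X]) (m : ℕ) (z : ℂ) :
    cPar p m z = 2 * max |(uPar p m z ^ (m - 1)).re| |(uPar p m z ^ (m - 1)).im| := by
  rw [cPar, gammaPar, deltaPar, abs_mul, abs_mul, abs_neg, abs_two,
    mul_max_of_nonneg _ _ two_pos.le]

lemma norm_uPar_pow_le_cPar (p : ℂ[X]) (m : ℕ) (z : ℂ) :
    ‖uPar p m z‖ ^ (m - 1) ≤ cPar p m z := by
  rw [← norm_pow, cPar_eq_two_mul_max, two_mul]
  exact (Complex.norm_le_abs_re_add_abs_im _).trans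
    (add_le_add (le_max_left _ _) (le_max_right _ _))

lemma cPar_le (p : ℂ[X]) (m : ℕ) (z : ℂ) : cPar p m z ≤ 2 * ‖uPar p m z‖ ^ (m - 1) := by
  rw [← norm_pow, cPar_eq_two_mul_max]
  gcongr
  exact max_le (Complex.abs_re_le_norm _) (Complex.abs_im_le_norm _)

lemma six_mul_Amax_sq_mul_CPar (hp : p ≠ 0) (m : ℕ) (z : ℂ) :
    6 * Amax p z ^ 2 * CPar p m z = cPar p m z * ‖uPar p m z‖ ^ ((2 : ℤ) - m) := by
  have hA := Amax_pos hp z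
  rw [CPar]
  field_simp

lemma norm_uPar_zpow_mul_pow (hm : m ≠ 0) (hu : uPar p m z ≠ 0) :
    ‖uPar p m z‖ ^ (m - 1) * ‖uPar p m z‖ ^ ((2 : ℤ) - m) = ‖uPar p m z‖ := by
  rw [← zpow_natCast, ← zpow_add₀ (norm_ne_zero_iff.2 hu)]
  convert zpow_one _ using 2
  omega

lemma norm_uPar_le_CPar (hm : m ≠ 0) (hu : uPar p m z ≠ 0) :
    ‖uPar p m z‖ ≤ 6 * Amax p z ^ 2 * CPar p m z := by
  rw [six_mul_Amax_sq_mul_CPar (ne_zero_of_uPar_ne_zero hu)]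
  nth_rw 1 [← norm_uPar_zpow_mul_pow hm hu]
  gcongr
  exact norm_uPar_pow_le_cPar p m z

lemma CPar_le_third (hm : m ≠ 0) (hu : uPar p m z ≠ 0) : CPar p m z ≤ 1 / 3 := by
  have hp := ne_zero_of_uPar_ne_zero hu
  have hA : 0 < Amax p z ^ 2 := pow_pos (Amax_pos hp z) 2
  have hle : 6 * Amax p z ^ 2 * CPar p m z ≤ 2 * Amax p z ^ 2 := calc
    6 * Amax p z ^ 2 * CPar p m z = cPar p m z * ‖uPar p m z‖ ^ ((2 : ℤ) - m) :=
        six_mul_Amax_sq_mul_CPar hp m z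
    _ ≤ 2 * ‖uPar p m z‖ ^ (m - 1) * ‖uPar p m z‖ ^ ((2 : ℤ) - m) := by
        gcongr
        exact cPar_le p m z
    _ = 2 * ‖uPar p m z‖ := by rw [mul_assoc, norm_uPar_zpow_mul_pow hm hu]
    _ ≤ 2 * Amax p z ^ 2 := by gcongr; exact norm_uPar_le p m z
  nlinarith

/-- With `w = u_m^(m-1)`, the four angles make `e^(imθ)` equal to `1`, `-1`, `i`, `-i`, so that it
rotates the larger of the components `Re w`, `Im w` onto the negative real axis. -/
lemma two_mul_re_uPar_pow_mul_exp_thetaPar (hm : m ≠ 0) (p : ℂ[X]) (z : ℂ) :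
    2 * (uPar p m z ^ (m - 1) * Complex.exp (thetaPar p m z * Complex.I) ^ m).re
      = -cPar p m z := by
  have hm' : (m : ℂ) ≠ 0 := Nat.cast_ne_zero.2 hm
  have hexp (φ : ℝ) (ψ : ℂ) (h : m * (φ : ℂ) = ψ) :
      Complex.exp (φ * Complex.I) ^ m = Complex.exp (ψ * Complex.I) := by
    rw [← Complex.exp_nat_mul, ← mul_assoc, h]
  have hexp_three : Complex.exp (3 * Real.pi / 2 * Complex.I) = -Complex.I := by
    rw [show 3 * (Real.pi : ℂ) / 2 * Complex.I = Real.pi * Complex.I + Real.pi / 2 * Complex.I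
      by ring, Complex.exp_add, Complex.exp_pi_mul_I, Complex.exp_pi_div_two_mul_I, neg_one_mul]
  have hδ (h : cPar p m z ≠ |gammaPar p m z|) : cPar p m z = |deltaPar p m z| :=
    (max_choice _ _).resolve_left h
  unfold thetaPar
  split_ifs with hc hneg hneg
  · rw [hc, abs_of_neg hneg, gammaPar]
    simp
  · rw [hc, abs_of_nonneg (not_lt.1 hneg), gammaPar, hexp _ Real.pi (by push_cast; field_simp),
      Complex.exp_pi_mul_I]
    simp
  · rw [hδ hc, abs_of_neg hneg, deltaPar, hexp _ (Real.pi / 2) (by push_cast; field_simp),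
      Complex.exp_pi_div_two_mul_I]
    simp
  · rw [hδ hc, abs_of_nonneg (not_lt.1 hneg), deltaPar,
      hexp _ (3 * Real.pi / 2) (by push_cast; field_simp), hexp_three]
    simp

end Parameters

section Displacement

variable {p : ℂ[X]} {m : ℕ} {z : ℂ}

lemma rniWith_sub (p : ℂ[X]) (m : ℕ) (z : ℂ) :
    rniWith p m z - z = ((CPar p m z / 3 : ℝ) : ℂ) * (uPar p m z / (‖uPar p m z‖ : ℂ))
      * Complex.exp (thetaPar p m z * Complex.I) :=
  add_sub_cancel_left _ _

lemma norm_rniWith_sub (hm : m ≠ 0) (hu : uPar p m z ≠ 0) :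
    ‖rniWith p m z - z‖ = CPar p m z / 3 := by
  have hC : 0 ≤ CPar p m z / 3 := by
    have hA : 0 < Amax p z := Amax_pos (ne_zero_of_uPar_ne_zero hu) z
    have hle := norm_uPar_le_CPar hm hu
    have := (mul_nonneg_iff_of_pos_left (by positivity)).1 ((norm_nonneg _).trans hle)
    positivity
  rw [rniWith_sub, norm_mul, norm_mul, Complex.norm_exp_ofReal_mul_I, norm_div, Complex.norm_real,
    Complex.norm_real, norm_norm, div_self (norm_ne_zero_iff.2 hu), Real.norm_of_nonneg hC,
    mul_one, mul_one]

lemma norm_rniWith_sub_le_ninth (hm : m ≠ 0) (hu : uPar p m z ≠ 0) :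
    ‖rniWith p m z - z‖ ≤ 1 / 9 := by
  rw [norm_rniWith_sub hm hu]
  linarith [CPar_le_third hm hu]

lemma norm_uPar_le_norm_rniWith_sub (hm : m ≠ 0) (hu : uPar p m z ≠ 0) :
    ‖uPar p m z‖ ≤ 18 * Amax p z ^ 2 * ‖rniWith p m z - z‖ := by
  rw [norm_rniWith_sub hm hu]
  linarith [norm_uPar_le_CPar hm hu]

lemma inner_coeff_taylor_rniWith_sub_pow (hm : m ≠ 0) (hu : uPar p m z ≠ 0) :
    inner ℂ ((taylor z p).coeff 0) ((taylor z p).coeff m * (rniWith p m z - z) ^ m)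
      = (((CPar p m z / 3) ^ m * ‖uPar p m z‖ ^ ((2 : ℤ) - m) : ℝ) : ℂ)
        * (uPar p m z ^ (m - 1) * Complex.exp (thetaPar p m z * Complex.I) ^ m) := by
  have hconj : (taylor z p).coeff m * (starRingEnd ℂ) (p.eval z)
      = (starRingEnd ℂ) (uPar p m z) := by
    rw [uPar_eq_eval_mul_conj_coeff_taylor, map_mul, Complex.conj_conj, mul_comm]
  rw [RCLike.inner_apply, taylor_coeff_zero, mul_right_comm, hconj, rniWith_sub]
  set u := uPar p m z
  -- Everything reduces to `conj u * u ^ m = ‖u‖ ^ 2 * u ^ (m - 1)`.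
  have hnorm : (‖u‖ : ℂ) ^ 2 = (starRingEnd ℂ) u * u := (Complex.conj_mul' u).symm
  have hzpow : ((‖u‖ ^ ((2 : ℤ) - m) : ℝ) : ℂ) = (‖u‖ : ℂ) ^ 2 / (‖u‖ : ℂ) ^ m := by
    rw [zpow_sub₀ (norm_ne_zero_iff.2 hu)]
    push_cast
    norm_cast
  rw [Complex.ofReal_mul, hzpow, hnorm, mul_pow, mul_pow, div_pow, ← mul_pow_sub_one hm u,
    Complex.ofReal_pow]
  ring

lemma two_mul_re_inner_coeff_taylor_rniWith_sub_pow (hm : m ≠ 0) (hu : uPar p m z ≠ 0) :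
    2 * RCLike.re
        (inner ℂ ((taylor z p).coeff 0) ((taylor z p).coeff m * (rniWith p m z - z) ^ m))
      = -(18 * Amax p z ^ 2 * ‖rniWith p m z - z‖ ^ (m + 1)) := by
  have hθ := two_mul_re_uPar_pow_mul_exp_thetaPar hm p z
  have hC := six_mul_Amax_sq_mul_CPar (ne_zero_of_uPar_ne_zero hu) m z
  rw [norm_rniWith_sub hm hu, inner_coeff_taylor_rniWith_sub_pow hm hu,
    RCLike.re_eq_complex_re, Complex.re_ofReal_mul]
  linear_combination (CPar p m z / 3) ^ m * (‖uPar p m z‖ ^ ((2 : ℤ) - m) * hθ + hC)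

end Displacement

section Iterate

variable {p : ℂ[X]} {z : ℂ}

lemma kIndex_le {j : ℕ} (hj : j ≠ 0) (h : dEval p j z ≠ 0) : kIndex p z ≤ j :=
  Nat.sInf_le ⟨Nat.one_le_iff_ne_zero.2 hj, h⟩

lemma kIndex_spec {j : ℕ} (hj : j ≠ 0) (h : dEval p j z ≠ 0) :
    1 ≤ kIndex p z ∧ dEval p (kIndex p z) z ≠ 0 :=
  Nat.sInf_mem (s := {j : ℕ | 1 ≤ j ∧ dEval p j z ≠ 0}) ⟨j, Nat.one_le_iff_ne_zero.2 hj, h⟩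

lemma kIndex_eq_one (hz : p.derivative.eval z ≠ 0) : kIndex p z = 1 :=
  le_antisymm (kIndex_le one_ne_zero hz) (kIndex_spec one_ne_zero hz).1

lemma dEval_natDegree_ne_zero (hp : p ≠ 0) (z : ℂ) : dEval p p.natDegree z ≠ 0 := by
  rwa [dEval_ne_zero_iff, coeff_taylor_natDegree, leadingCoeff_ne_zero]

lemma kIndex_le_natDegree (hdeg : 0 < p.natDegree) (z : ℂ) : kIndex p z ≤ p.natDegree :=
  kIndex_le hdeg.ne' (dEval_natDegree_ne_zero (ne_zero_of_natDegree_gt hdeg) z)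

lemma kIndex_ne_zero (hdeg : 0 < p.natDegree) (z : ℂ) : kIndex p z ≠ 0 :=
  Nat.one_le_iff_ne_zero.1
    (kIndex_spec hdeg.ne' (dEval_natDegree_ne_zero (ne_zero_of_natDegree_gt hdeg) z)).1

lemma coeff_taylor_kIndex_ne_zero (hdeg : 0 < p.natDegree) (z : ℂ) :
    (taylor z p).coeff (kIndex p z) ≠ 0 :=
  dEval_ne_zero_iff.1
    (kIndex_spec hdeg.ne' (dEval_natDegree_ne_zero (ne_zero_of_natDegree_gt hdeg) z)).2

lemma coeff_taylor_eq_zero_of_lt_kIndex {j : ℕ} (hj : j ≠ 0) (hlt : j < kIndex p z) :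
    (taylor z p).coeff j = 0 :=
  not_not.1 fun h => hlt.not_ge (kIndex_le hj (dEval_ne_zero_iff.2 h))

lemma uPar_kIndex_ne_zero (hdeg : 0 < p.natDegree) (hz : p.eval z ≠ 0) :
    uPar p (kIndex p z) z ≠ 0 := by
  rw [uPar_eq_eval_mul_conj_coeff_taylor]
  exact mul_ne_zero hz ((_root_.map_ne_zero _).2 (coeff_taylor_kIndex_ne_zero hdeg z))

lemma norm_eval_RN_sq_add_le (hdeg : 0 < p.natDegree) (hz : p.eval z ≠ 0) :
    ‖p.eval (RN p z)‖ ^ 2 + 10 * Amax p z ^ 2 * ‖RN p z - z‖ ^ (kIndex p z + 1)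
      ≤ ‖p.eval z‖ ^ 2 := by
  have hk := kIndex_ne_zero hdeg z
  have hu := uPar_kIndex_ne_zero hdeg hz
  have hshort : ‖RN p z - z‖ ≤ 1 / 2 :=
    (norm_rniWith_sub_le_ninth hk hu).trans (by norm_num)
  have hexpand := norm_eval_sq_le hk (norm_coeff_taylor_le_Amax p z)
    (fun _ => coeff_taylor_eq_zero_of_lt_kIndex) hshort
  have hdescent := two_mul_re_inner_coeff_taylor_rniWith_sub_pow hk hu
  rw [taylor_eval, sub_add_cancel] at hexpand
  rw [← RN] at hdescent
  rw [hdescent, taylor_coeff_zero] at hexpand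
  linarith

lemma norm_RN_sub_le_one (hdeg : 0 < p.natDegree) (hz : p.eval z ≠ 0) : ‖RN p z - z‖ ≤ 1 :=
  (norm_rniWith_sub_le_ninth (kIndex_ne_zero hdeg z) (uPar_kIndex_ne_zero hdeg hz)).trans
    (by norm_num)

lemma RN_ne_self (hdeg : 0 < p.natDegree) (hz : p.eval z ≠ 0) : RN p z ≠ z := by
  intro hfix
  have hu := uPar_kIndex_ne_zero hdeg hz
  have hle := norm_uPar_le_norm_rniWith_sub (kIndex_ne_zero hdeg z) hu
  rw [← RN, hfix, sub_self, norm_zero, mul_zero] at hle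
  exact hu (norm_le_zero_iff.1 hle)

lemma norm_eval_RN_lt (hdeg : 0 < p.natDegree) (hz : p.eval z ≠ 0) :
    ‖p.eval (RN p z)‖ < ‖p.eval z‖ := by
  have hA : 0 < Amax p z := Amax_pos (ne_zero_of_natDegree_gt hdeg) z
  have hstep : 0 < ‖RN p z - z‖ := norm_pos_iff.2 (sub_ne_zero.2 (RN_ne_self hdeg hz))
  refine lt_of_pow_lt_pow_left₀ 2 (norm_nonneg _) ?_
  refine lt_of_lt_of_le ?_ (norm_eval_RN_sq_add_le hdeg hz)
  exact lt_add_of_pos_right _ (by positivity)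

lemma norm_eval_RN_sq_add_leadingCoeff_le (hdeg : 0 < p.natDegree) (hz : p.eval z ≠ 0) :
    ‖p.eval (RN p z)‖ ^ 2 + 10 * ‖p.leadingCoeff‖ ^ 2 * ‖RN p z - z‖ ^ (p.natDegree + 1)
      ≤ ‖p.eval z‖ ^ 2 := by
  refine le_trans ?_ (norm_eval_RN_sq_add_le hdeg hz)
  gcongr _ + 10 * ?_ ^ 2 * ?_
  · exact norm_leadingCoeff_le_Amax p z
  · exact pow_le_pow_of_le_one (norm_nonneg _) (norm_RN_sub_le_one hdeg hz)
      (Nat.succ_le_succ (kIndex_le_natDegree hdeg z))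

lemma norm_eval_mul_norm_eval_derivative_le (hz : p.eval z ≠ 0) :
    ‖p.eval z‖ * ‖p.derivative.eval z‖ ≤ 18 * Amax p z ^ 2 * ‖RN p z - z‖ := by
  by_cases hz' : p.derivative.eval z = 0
  · rw [hz', norm_zero, mul_zero]
    positivity
  · have hnorm : ‖uPar p 1 z‖ = ‖p.eval z‖ * ‖p.derivative.eval z‖ := by
      rw [uPar_eq_eval_mul_conj_coeff_taylor, norm_mul, RCLike.norm_conj, taylor_coeff_one]
    have hu : uPar p 1 z ≠ 0 := by
      rw [← norm_ne_zero_iff, hnorm]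
      exact mul_ne_zero (norm_ne_zero_iff.2 hz) (norm_ne_zero_iff.2 hz')
    rw [RN, kIndex_eq_one hz', ← hnorm]
    exact norm_uPar_le_norm_rniWith_sub one_ne_zero hu

end Iterate

section Orbit

variable {p : ℂ[X]} {w z₀ : ℂ}

lemma rnmOrbit_eq_const (h₀ : p.eval z₀ = 0) : rnmOrbit p z₀ = fun _ => z₀ := by
  funext t
  induction t with
  | zero => rfl
  | succ t ih => rw [rnmOrbit, ih, if_pos h₀]

lemma norm_eval_rnmOrbit_succ_sq_add_le (hdeg : 0 < p.natDegree) (z₀ : ℂ) (t : ℕ) :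
    ‖p.eval (rnmOrbit p z₀ (t + 1))‖ ^ 2 + 10 * ‖p.leadingCoeff‖ ^ 2
        * dist (rnmOrbit p z₀ (t + 1)) (rnmOrbit p z₀ t) ^ (p.natDegree + 1)
      ≤ ‖p.eval (rnmOrbit p z₀ t)‖ ^ 2 := by
  rw [rnmOrbit]
  split_ifs with hroot
  · simp
  · rw [dist_eq_norm]
    exact norm_eval_RN_sq_add_leadingCoeff_le hdeg hroot

lemma norm_eval_mul_norm_eval_derivative_rnmOrbit_le (p : ℂ[X]) (z₀ : ℂ) (t : ℕ) :
    ‖p.eval (rnmOrbit p z₀ t)‖ * ‖p.derivative.eval (rnmOrbit p z₀ t)‖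
      ≤ 18 * Amax p (rnmOrbit p z₀ t) ^ 2
        * dist (rnmOrbit p z₀ (t + 1)) (rnmOrbit p z₀ t) := by
  rw [rnmOrbit]
  split_ifs with hroot
  · simp [hroot]
  · rw [dist_eq_norm]
    exact norm_eval_mul_norm_eval_derivative_le hroot

lemma antitone_norm_eval_rnmOrbit (hdeg : 0 < p.natDegree) (z₀ : ℂ) :
    Antitone fun t => ‖p.eval (rnmOrbit p z₀ t)‖ :=
  antitone_nat_of_succ_le fun t => by
    refine le_of_sq_le_sq ?_ (norm_nonneg _)
    exact (le_add_of_nonneg_right (by positivity)).trans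
      (norm_eval_rnmOrbit_succ_sq_add_le hdeg z₀ t)

lemma tendsto_dist_rnmOrbit_succ (hdeg : 0 < p.natDegree) (z₀ : ℂ) :
    Tendsto (fun t => dist (rnmOrbit p z₀ (t + 1)) (rnmOrbit p z₀ t)) atTop (𝓝 0) := by
  set V : ℕ → ℝ := fun t => ‖p.eval (rnmOrbit p z₀ t)‖ ^ 2
  set d : ℕ → ℝ := fun t => dist (rnmOrbit p z₀ (t + 1)) (rnmOrbit p z₀ t)
  have hlead : 0 < 10 * ‖p.leadingCoeff‖ ^ 2 := by
    have hp : p ≠ 0 := ne_zero_of_natDegree_gt hdeg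
    have := norm_pos_iff.2 (leadingCoeff_ne_zero.2 hp)
    positivity
  have hV_anti : Antitone V := fun s t hst =>
    pow_le_pow_left₀ (norm_nonneg _) (antitone_norm_eval_rnmOrbit hdeg z₀ hst) 2
  have hV_bdd : BddBelow (Set.range V) := ⟨0, by rintro _ ⟨t, rfl⟩; positivity⟩
  have hd_le (t : ℕ) :
      d t ^ (p.natDegree + 1) ≤ (V t - V (t + 1)) / (10 * ‖p.leadingCoeff‖ ^ 2) := by
    rw [le_div_iff₀' hlead]
    linarith [norm_eval_rnmOrbit_succ_sq_add_le hdeg z₀ t]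
  refine tendsto_zero_of_tendsto_pow_zero p.natDegree.succ_ne_zero (fun _ => dist_nonneg) ?_
  refine squeeze_zero (fun t => by positivity) hd_le ?_
  simpa using (tendsto_sub_succ_zero_of_antitone hV_anti hV_bdd).div_const _

lemma exists_mapClusterPt_rnmOrbit (hdeg : 0 < p.natDegree) (z₀ : ℂ) :
    ∃ w, MapClusterPt w atTop (rnmOrbit p z₀) := by
  have hcoercive : Tendsto (fun z : ℂ => ‖p.eval z‖) (cocompact ℂ) atTop :=
    p.tendsto_norm_atTop (natDegree_pos_iff_degree_pos.1 hdeg)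
      tendsto_norm_cocompact_atTop
  obtain ⟨K, hK, hKsub⟩ :=
    mem_cocompact.1 (hcoercive.eventually (eventually_gt_atTop ‖p.eval z₀‖))
  have horbit (t : ℕ) : rnmOrbit p z₀ t ∈ K := by
    by_contra houtside
    exact (hKsub houtside).not_ge (antitone_norm_eval_rnmOrbit hdeg z₀ (Nat.zero_le t))
  have hprincipal : Tendsto (rnmOrbit p z₀) atTop (𝓟 K) := tendsto_principal.2 (.of_forall horbit)
  obtain ⟨w, -, hw⟩ := hK.exists_mapClusterPt hprincipal
  exact ⟨w, hw⟩

lemma eval_mul_derivative_eq_zero_of_mapClusterPt_rnmOrbit (hdeg : 0 < p.natDegree)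
    (hw : MapClusterPt w atTop (rnmOrbit p z₀)) : (p * p.derivative).eval w = 0 := by
  obtain ⟨φ, hφ, hlim⟩ := hw.tendsto_subseq
  have hbound : Tendsto (fun s => 18 * Amax p (rnmOrbit p z₀ (φ s)) ^ 2
      * dist (rnmOrbit p z₀ (φ s + 1)) (rnmOrbit p z₀ (φ s))) atTop (𝓝 0) := by
    have hA := ((((continuous_Amax p).tendsto w).comp hlim).pow 2).const_mul 18
    simpa using hA.mul ((tendsto_dist_rnmOrbit_succ hdeg z₀).comp hφ.tendsto_atTop)
  have hprod : Tendsto (fun s => ‖(p * p.derivative).eval (rnmOrbit p z₀ (φ s))‖) atTop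
      (𝓝 ‖(p * p.derivative).eval w‖) :=
    ((p * p.derivative).continuous.norm.tendsto w).comp hlim
  rw [← norm_le_zero_iff]
  refine le_of_tendsto_of_tendsto' hprod hbound fun s => ?_
  rw [eval_mul, norm_mul]
  exact norm_eval_mul_norm_eval_derivative_rnmOrbit_le p z₀ (φ s)

theorem exists_tendsto_rnmOrbit (hdeg : 0 < p.natDegree) (z₀ : ℂ) :
    ∃ w, (p.eval w = 0 ∨ p.derivative.eval w = 0) ∧ Tendsto (rnmOrbit p z₀) atTop (𝓝 w) := by
  obtain ⟨w, hw⟩ := exists_mapClusterPt_rnmOrbit hdeg z₀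
  have hne : p * p.derivative ≠ 0 :=
    mul_ne_zero (ne_zero_of_natDegree_gt hdeg)
      (derivative_eq_zero.not.2 hdeg.ne')
  have hiso : ∀ᶠ x in 𝓝[≠] w, ¬ MapClusterPt x atTop (rnmOrbit p z₀) := by
    filter_upwards [nhdsNE_le_cofinite w (finite_setOfPred_isRoot hne).compl_mem_cofinite]
      with x hx hcluster
    exact hx (eval_mul_derivative_eq_zero_of_mapClusterPt_rnmOrbit hdeg hcluster)
  refine ⟨w, ?_, tendsto_of_isolated_mapClusterPt hw (tendsto_dist_rnmOrbit_succ hdeg z₀) hiso⟩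
  rw [← mul_eq_zero, ← eval_mul]
  exact eval_mul_derivative_eq_zero_of_mapClusterPt_rnmOrbit hdeg hw

lemma norm_eval_lt_of_tendsto_rnmOrbit (hdeg : 0 < p.natDegree) (h₀ : p.eval z₀ ≠ 0)
    (hw : Tendsto (rnmOrbit p z₀) atTop (𝓝 w)) : ‖p.eval w‖ < ‖p.eval z₀‖ := by
  have hfirst : rnmOrbit p z₀ 1 = RN p z₀ := if_neg h₀
  calc ‖p.eval w‖ ≤ ‖p.eval (rnmOrbit p z₀ 1)‖ :=
        (antitone_norm_eval_rnmOrbit hdeg z₀).le_of_tendsto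
          ((p.continuous.norm.tendsto w).comp hw) 1
    _ < ‖p.eval z₀‖ := hfirst ▸ norm_eval_RN_lt hdeg h₀

end Orbit

/-- **Convergence of RNM below the critical threshold.** If `|p(z₀)| ≤ |p(w)|` for every
critical point `w` of `p` with `p(w) ≠ 0`, then the RNM orbit of `z₀` converges to a root
of `p`. -/
theorem rnm_converges_below_threshold (p : Polynomial ℂ) (hdeg : 2 ≤ p.natDegree)
    (z₀ : ℂ)
    (hthr : ∀ w : ℂ, p.derivative.eval w = 0 → p.eval w ≠ 0 →
      ‖p.eval z₀‖ ≤ ‖p.eval w‖) :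
    ∃ θstar : ℂ, p.eval θstar = 0 ∧
      Filter.Tendsto (rnmOrbit p z₀) Filter.atTop (nhds θstar) := by
  have hdeg' : 0 < p.natDegree := by omega
  obtain ⟨w, hzero, hlim⟩ := exists_tendsto_rnmOrbit hdeg' z₀
  refine ⟨w, ?_, hlim⟩
  by_contra hw
  have hcrit : p.derivative.eval w = 0 := hzero.resolve_left hw
  have h₀ : p.eval z₀ ≠ 0 := fun h₀ => by
    rw [rnmOrbit_eq_const h₀, tendsto_const_nhds_iff] at hlim
    exact hw (hlim ▸ h₀)
  exact (hthr w hcrit hw).not_gt (norm_eval_lt_of_tendsto_rnmOrbit hdeg' h₀ hlim)
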